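/- Fix S ⊆ N and suppose a : N → ℝ satisfies a_i = β R_i + β Σ_{j∈S} P_{ij} a_j for all i ∈ N. Then a_i = β r_i^S / (1−β) for every i ∈ S, and a_i = β r_i^S for every i ∉ S. (The relation between the quantities computed in the Varaiya–Walrand–Buyukkoc algorithm and the marginal rewards; taking R ≡ 1 gives the analogous relation between the quantities b and the marginal workloads w.) -/

import Mathlib

open Matrix BigOperators
open scoped Classical

noncomputable section

/-- Transition matrix of the `S`-active policy: row `i` of `P` if `i ∈ S`,
the `i`-th standard unit row otherwise. -/
def PAct {N : Type*} [DecidableEq N] (P : Matrix N N ℝ) (S : Finset N) : Matrix N N ℝ :=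
  fun i j => if i ∈ S then P i j else if i = j then 1 else 0

/-- Transition matrix of the `Sᶜ`-active policy. -/
def PPas {N : Type*} [DecidableEq N] (P : Matrix N N ℝ) (S : Finset N) : Matrix N N ℝ :=
  fun i j => if i ∈ S then (if i = j then 1 else 0) else P i j

/-- Basis matrix `B^S = I - β P^S`. -/
def BMat {N : Type*} [Fintype N] [DecidableEq N] (β : ℝ) (P : Matrix N N ℝ) (S : Finset N) :
    Matrix N N ℝ := 1 - β • PAct P S

/-- Non-basic matrix `N^S = I - β P^{Sᶜ}`. -/
def NMat {N : Type*} [Fintype N] [DecidableEq N] (β : ℝ) (P : Matrix N N ℝ) (S : Finset N) :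
    Matrix N N ℝ := 1 - β • PPas P S

/-- Basis inverse `H^S = (B^S)⁻¹`. -/
def HMat {N : Type*} [Fintype N] [DecidableEq N] (β : ℝ) (P : Matrix N N ℝ) (S : Finset N) :
    Matrix N N ℝ := (BMat β P S)⁻¹

/-- Tableau matrix `A^S = N^S · H^S`. -/
def AMat {N : Type*} [Fintype N] [DecidableEq N] (β : ℝ) (P : Matrix N N ℝ) (S : Finset N) :
    Matrix N N ℝ := NMat β P S * HMat β P S

/-- Work measure `g^S = H^S · 1_S`. -/
def gWork {N : Type*} [Fintype N] [DecidableEq N] (β : ℝ) (P : Matrix N N ℝ) (S : Finset N) :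
    N → ℝ := (HMat β P S).mulVec (fun j => if j ∈ S then 1 else 0)

/-- Reward measure `f^S = H^S · (R·1_S)`. -/
def fRew {N : Type*} [Fintype N] [DecidableEq N] (β : ℝ) (P : Matrix N N ℝ) (R : N → ℝ)
    (S : Finset N) : N → ℝ := (HMat β P S).mulVec (fun j => if j ∈ S then R j else 0)

/-- Marginal work `w_i^S`. -/
def wMarg {N : Type*} [Fintype N] [DecidableEq N] (β : ℝ) (P : Matrix N N ℝ) (S : Finset N)
    (i : N) : ℝ :=
  if i ∈ S then (1 - β) * gWork β P S i
  else 1 + β * ∑ j ∈ S, P i j * gWork β P S j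

/-- Marginal reward `r_i^S`. -/
def rMarg {N : Type*} [Fintype N] [DecidableEq N] (β : ℝ) (P : Matrix N N ℝ) (R : N → ℝ)
    (S : Finset N) (i : N) : ℝ :=
  if i ∈ S then (1 - β) * fRew β P R S i
  else R i + β * ∑ j ∈ S, P i j * fRew β P R S j

/-- Marginal productivity rate `ν_i^S = r_i^S / w_i^S`. -/
def nuMarg {N : Type*} [Fintype N] [DecidableEq N] (β : ℝ) (P : Matrix N N ℝ) (R : N → ℝ)
    (S : Finset N) (i : N) : ℝ := rMarg β P R S i / wMarg β P S i

/-- Feasibility of a pair of row vectors `(x⁰, x¹)` for initial state `i`: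
`x⁰, x¹ ≥ 0` and `(1-β) x⁰ + x¹ (I - β P) = e_i`. -/
def Feasible {N : Type*} [Fintype N] [DecidableEq N] (β : ℝ) (P : Matrix N N ℝ) (i : N)
    (x0 x1 : N → ℝ) : Prop :=
  (∀ j, 0 ≤ x0 j) ∧ (∀ j, 0 ≤ x1 j) ∧
    (1 - β) • x0 + Matrix.vecMul x1 (1 - β • P) = Pi.single i 1

/-- Modified reward vector `R̂ = R - (I - βP)·Q`. -/
def Rhat {N : Type*} [Fintype N] [DecidableEq N] (β : ℝ) (P : Matrix N N ℝ) (R Q : N → ℝ) :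
    N → ℝ := fun i => R i - ((1 - β • P).mulVec Q) i

theorem PAct_nonneg {N : Type*} [DecidableEq N] (P : Matrix N N ℝ) (hP0 : ∀ i j, 0 ≤ P i j)
    (S : Finset N) (i j : N) : 0 ≤ PAct P S i j := by
  unfold PAct
  split_ifs
  · exact hP0 i j
  · exact zero_le_one
  · exact le_rfl

theorem PAct_sum {N : Type*} [Fintype N] [DecidableEq N] (P : Matrix N N ℝ)
    (hP1 : ∀ i, ∑ j, P i j = 1) (S : Finset N) (i : N) : ∑ j, PAct P S i j = 1 := by
  unfold PAct
  by_cases h : i ∈ S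
  · simp [h, hP1]
  · simp [h]

theorem BMat_det {N : Type*} [Fintype N] [DecidableEq N]
    (P : Matrix N N ℝ) (hP0 : ∀ i j, 0 ≤ P i j) (hP1 : ∀ i, ∑ j, P i j = 1)
    (β : ℝ) (hβ0 : 0 < β) (hβ1 : β < 1) (S : Finset N) : (BMat β P S).det ≠ 0 := by
  apply det_ne_zero_of_sum_row_lt_diag
  intro k
  have hs := PAct_sum P hP1 S k
  rw [← Finset.add_sum_erase _ _ (Finset.mem_univ k)] at hs
  have h1 : ∑ j ∈ Finset.univ.erase k, ‖BMat β P S k j‖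
      = β * ∑ j ∈ Finset.univ.erase k, PAct P S k j := by
    rw [Finset.mul_sum]
    refine Finset.sum_congr rfl fun j hj => ?_
    have hne : k ≠ j := (Finset.ne_of_mem_erase hj).symm
    simp [BMat, Matrix.one_apply_ne hne, abs_of_pos hβ0, abs_of_nonneg (PAct_nonneg P hP0 S k j)]
  rw [h1]
  have h2 : BMat β P S k k = 1 - β * PAct P S k k := by simp [BMat]
  rw [h2]
  refine lt_of_lt_of_le ?_ (le_abs_self _)
  have h3 : ∑ j ∈ Finset.univ.erase k, PAct P S k j = 1 - PAct P S k k := by linarith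
  rw [h3]
  linarith

/-- relation between the quantities computed in the
Varaiya–Walrand–Buyukkoc algorithm and the marginal rewards. -/
theorem stmt16 {N : Type*} [Fintype N] [DecidableEq N] [Nonempty N]
    (P : Matrix N N ℝ) (hP0 : ∀ i j, 0 ≤ P i j) (hP1 : ∀ i, ∑ j, P i j = 1)
    (β : ℝ) (hβ0 : 0 < β) (hβ1 : β < 1) (R : N → ℝ)
    (S : Finset N) (a : N → ℝ)
    (ha : ∀ i, a i = β * R i + β * ∑ j ∈ S, P i j * a j) :
    (∀ i ∈ S, a i = β * rMarg β P R S i / (1 - β)) ∧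
    (∀ i ∉ S, a i = β * rMarg β P R S i) := by
  have hf : fRew β P R S = fun i => if i ∈ S then a i / β else 0 := by
    have hB : (BMat β P S).mulVec (fun i => if i ∈ S then a i / β else 0)
        = fun j => if j ∈ S then R j else 0 := by
      funext i
      simp only [BMat, Matrix.sub_mulVec, Matrix.one_mulVec, Matrix.smul_mulVec, Pi.sub_apply,
        Pi.smul_apply, smul_eq_mul]
      by_cases hi : i ∈ S
      · have h1 : (PAct P S).mulVec (fun i => if i ∈ S then a i / β else 0) i
            = (∑ j ∈ S, P i j * a j) / β := by
          simp [Matrix.mulVec, dotProduct, PAct, hi, Finset.sum_div, mul_div_assoc]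
        rw [h1]
        simp only [hi, if_true]
        have := ha i
        field_simp
        linarith
      · simp [Matrix.mulVec, dotProduct, PAct, hi]
    unfold fRew HMat
    rw [← hB, Matrix.mulVec_mulVec, Matrix.nonsing_inv_mul _
      (isUnit_iff_ne_zero.mpr (BMat_det P hP0 hP1 β hβ0 hβ1 S)), Matrix.one_mulVec]
  have hb : (1 - β) ≠ 0 := by linarith
  refine ⟨fun i hi => ?_, fun i hi => ?_⟩
  · simp only [rMarg, hf, hi, if_true]
    field_simp
  · have h1 : ∑ j ∈ S, P i j * (if j ∈ S then a j / β else 0) = (∑ j ∈ S, P i j * a j) / β := by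
      rw [Finset.sum_div]
      refine Finset.sum_congr rfl fun j hj => ?_
      simp [hj, mul_div_assoc]
    simp only [rMarg, hf, hi, if_false]
    rw [h1, ha i]
    field_simp
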